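/- Let δ>0 and s ∈ (0,1). The function r ↦ G_δ(s,r) is differentiable on (0,s), and for every r ∈ (0,s), with w = r(1−s)/(s(1−r)), one has d/dr G_δ(s,r) = K(δ)·(1−s)·w^{−1/2}(1−w)^{δ/2+1} ₂F₁((δ+1)/2,(δ+1)/2,δ/2,w) − (K(δ)/2)·(s/r)·w^{1/2}(1−w)^{δ/2} ₂F₁((δ+1)/2,(δ−1)/2,δ/2,w). -/

import Mathlib

open MeasureTheory Real Filter

/-- Ascending Pochhammer symbol `(a)_k = a(a+1)⋯(a+k-1)`. -/
noncomputable def poch (a : ℝ) (k : ℕ) : ℝ := ∏ i ∈ Finset.range k, (a + i)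

/-- Gauss hypergeometric function `₂F₁(a,b,c,z) = ∑ (a)_k (b)_k / (k! (c)_k) z^k`. -/
noncomputable def hyp2F1 (a b c z : ℝ) : ℝ :=
  ∑' k : ℕ, (poch a k * poch b k) / ((Nat.factorial k : ℝ) * poch c k) * z ^ k

/-- `K(δ) = 2 Γ((δ+1)/2)² / Γ(δ/2)²`. -/
noncomputable def Kcoef (δ : ℝ) : ℝ :=
  2 * Real.Gamma ((δ + 1) / 2) ^ 2 / Real.Gamma (δ / 2) ^ 2

/-- Two-point kernel `G_δ(s,r)`, equal to the second moment `E^δ[X_s X_r]` of a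
δ-dimensional Bessel bridge from 0 to 0 over [0,1]. -/
noncomputable def twoPt (δ s r : ℝ) : ℝ :=
  if s < r then
    Kcoef δ * (r - s) ^ (δ / 2 + 1) * (s * (1 - r)) ^ ((1 : ℝ) / 2) *
      (r * (1 - s)) ^ (-((δ + 1) / 2)) *
      hyp2F1 ((δ + 1) / 2) ((δ + 1) / 2) (δ / 2) (s * (1 - r) / (r * (1 - s)))
  else
    Kcoef δ * (s - r) ^ (δ / 2 + 1) * (r * (1 - s)) ^ ((1 : ℝ) / 2) *
      (s * (1 - r)) ^ (-((δ + 1) / 2)) *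
      hyp2F1 ((δ + 1) / 2) ((δ + 1) / 2) (δ / 2) (r * (1 - s) / (s * (1 - r)))

/-- Coefficient `D(s,r)`. -/
noncomputable def Dcoef (s r : ℝ) : ℝ :=
  if s < r then (1 - s) / ((r - s) * (1 - r)) else s / (r * (s - r))

/-- Coefficient `C_k = Γ(k+(δ+1)/2)/(Γ(δ/2) Γ(k+δ/2) k!)`. -/
noncomputable def Ccoef (δ : ℝ) (k : ℕ) : ℝ :=
  Real.Gamma ((k : ℝ) + (δ + 1) / 2) /
    (Real.Gamma (δ / 2) * Real.Gamma ((k : ℝ) + δ / 2) * (Nat.factorial k : ℝ))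

/-- Coefficient `f_k(s,r)`. -/
noncomputable def fcoef (s r : ℝ) (k : ℕ) : ℝ :=
  if s < r then (2 * (r - s)) ^ ((1 : ℝ) / 2 - (k : ℝ)) * (s / r) ^ ((k : ℝ) + 1 / 2)
  else (2 * (s - r)) ^ ((1 : ℝ) / 2 - (k : ℝ)) * ((1 - s) / (1 - r)) ^ ((k : ℝ) + 1 / 2)

/-- `Σ^δ_{r,s}(b) = Σ^δ_r(X_s | b)`, the density-weighted conditional expectation of a
δ-dimensional Bessel bridge. -/
noncomputable def SigmaRS (δ r s b : ℝ) : ℝ :=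
  ((2 : ℝ) ^ (δ / 2 - 1) * (r * (1 - r)) ^ (δ / 2))⁻¹ *
    Real.exp (-(Dcoef s r) * b ^ 2 / 2) *
    ∑' k : ℕ, Ccoef δ k * fcoef s r k * b ^ (2 * k)


/-!
For `r < s` the kernel is a function of the cross-ratio `w = r(1-s)/(s(1-r))` up to an elementary
factor: `G_δ(s,r) = K(δ) s(1-r) Φ(w)` with `Φ(w) = w^{1/2} (1-w)^{δ/2+1} F(w)` and
`F = ₂F₁((δ+1)/2,(δ+1)/2,δ/2,·)`. The contiguous relation
`z(1-z) F'(a,b,c) = (c-b) F(a,b-1,c) + (b-c+az) F(a,b,c)`, a comparison of Taylor coefficients,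
eliminates `F'` from `Φ'`. For these parameters `c - b = -1/2`, and what remains is
`Φ'(w) = w^{-1/2} (1-w)^{δ/2} ((1-w) F(w) - H(w)/2)` with `H = ₂F₁((δ+1)/2,(δ-1)/2,δ/2,·)`.
-/

section PowerSeries

variable {𝕜 F : Type*} [NontriviallyNormedField 𝕜] [NormedAddCommGroup F] [NormedSpace 𝕜 F]
  [CompleteSpace F] {p : FormalMultilinearSeries 𝕜 𝕜 F} {f : 𝕜 → F} {x y : 𝕜} {r : ENNReal}

theorem hasSum_deriv_of_hasFPowerSeriesOnBall (hf : HasFPowerSeriesOnBall f p x r)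
    (hy : y ∈ Metric.eball 0 r) :
    HasSum (fun n : ℕ => y ^ n • (n + 1) • p.coeff (n + 1)) (deriv f (x + y)) := by
  have h := (hf.fderiv.hasSum hy).mapL (ContinuousLinearMap.apply 𝕜 F (1 : 𝕜))
  simpa using h

theorem hasSum_smul_deriv_of_hasFPowerSeriesOnBall (hf : HasFPowerSeriesOnBall f p x r)
    (hy : y ∈ Metric.eball 0 r) :
    HasSum (fun n : ℕ => n • y ^ n • p.coeff n) (y • deriv f (x + y)) := by
  refine (hasSum_nat_add_iff' 1).1 ?_
  simpa [pow_succ', mul_smul, smul_comm (_ + 1 : ℕ)] using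
    (hasSum_deriv_of_hasFPowerSeriesOnBall hf hy).const_smul y

end PowerSeries

section Coefficients

variable {𝕂 : Type*} [Field 𝕂]

theorem ascPochhammer_succ_eval_left (a : 𝕂) (n : ℕ) :
    (ascPochhammer 𝕂 (n + 1)).eval a = a * (ascPochhammer 𝕂 n).eval (a + 1) := by
  simp [ascPochhammer_succ_left]

theorem ordinaryHypergeometricCoefficient_contiguous [CharZero 𝕂] (a b : 𝕂) {c : 𝕂}
    (hc : ∀ n : ℕ, c ≠ -n) (n : ℕ) :
    (n + 1) * ordinaryHypergeometricCoefficient a b c (n + 1) -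
        n * ordinaryHypergeometricCoefficient a b c n =
      (c - b) * ordinaryHypergeometricCoefficient a (b - 1) c (n + 1) +
        (b - c) * ordinaryHypergeometricCoefficient a b c (n + 1) +
        a * ordinaryHypergeometricCoefficient a b c n := by
  have hcn : c + n ≠ 0 := fun h => hc n (eq_neg_of_add_eq_zero_left h)
  have hn : (n : 𝕂) + 1 ≠ 0 := n.cast_add_one_ne_zero
  simp only [ordinaryHypergeometricCoefficient, ascPochhammer_succ_eval_left (b - 1),
    sub_add_cancel, ascPochhammer_succ_eval, Nat.factorial_succ, Nat.cast_mul, Nat.cast_succ,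
    mul_inv]
  field_simp
  ring

end Coefficients

section OrdinaryHypergeometric

variable {𝕂 : Type*} [RCLike 𝕂] (a b : 𝕂) {c z : 𝕂}

theorem one_le_radius_ordinaryHypergeometricSeries (𝔸 : Type*) [NormedDivisionRing 𝔸]
    [NormedAlgebra 𝕂 𝔸] (c : 𝕂) : 1 ≤ (ordinaryHypergeometricSeries 𝔸 a b c).radius := by
  by_cases! habc : ∀ k : ℕ, (k : 𝕂) ≠ -a ∧ (k : 𝕂) ≠ -b ∧ (k : 𝕂) ≠ -c
  · exact (ordinaryHypergeometricSeries_radius_eq_one 𝔸 a b c habc).ge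
  · -- The series is a polynomial; when `c = -k` this is due to the convention `0⁻¹ = 0`.
    obtain ⟨k, hk⟩ := habc
    have hk' : k = -a ∨ k = -b ∨ k = -c := by tauto
    have h := FormalMultilinearSeries.radius_eq_top_of_forall_image_add_eq_zero
      (ordinaryHypergeometricSeries 𝔸 a b c) (1 + k) fun n =>
        ordinaryHypergeometricSeries_eq_zero_of_neg_nat a b c hk' (by lia)
    simp [h]

theorem hasFPowerSeriesOnBall_ordinaryHypergeometric (c : 𝕂) :
    HasFPowerSeriesOnBall (₂F₁ a b c : 𝕂 → 𝕂) (ordinaryHypergeometricSeries 𝕂 a b c) 0 1 :=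
  have hr := one_le_radius_ordinaryHypergeometricSeries a b 𝕂 c
  (FormalMultilinearSeries.hasFPowerSeriesOnBall _ (one_pos.trans_le hr)).mono one_pos hr

theorem differentiableAt_ordinaryHypergeometric (c : 𝕂) (hz : ‖z‖ < 1) :
    DifferentiableAt 𝕂 (₂F₁ a b c : 𝕂 → 𝕂) z :=
  ((hasFPowerSeriesOnBall_ordinaryHypergeometric a b c).analyticAt_of_mem
    (by simpa [← ofReal_norm] using hz)).differentiableAt

theorem hasSum_ordinaryHypergeometric (c : 𝕂) (hz : ‖z‖ < 1) :
    HasSum (fun n : ℕ => ordinaryHypergeometricCoefficient a b c n * z ^ n) (₂F₁ a b c z) := by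
  have h := (hasFPowerSeriesOnBall_ordinaryHypergeometric a b c).hasSum (y := z)
    (by simpa [← ofReal_norm] using hz)
  simpa only [ordinaryHypergeometricSeries_apply_eq, smul_eq_mul, zero_add] using h

theorem hasSum_ordinaryHypergeometric_sub_one (c : 𝕂) (hz : ‖z‖ < 1) :
    HasSum (fun n : ℕ => ordinaryHypergeometricCoefficient a b c (n + 1) * z ^ (n + 1))
      (₂F₁ a b c z - 1) := by
  simpa [ordinaryHypergeometricCoefficient] using
    (hasSum_nat_add_iff' 1).2 (hasSum_ordinaryHypergeometric a b c hz)

theorem mul_one_sub_mul_deriv_ordinaryHypergeometric (hc : ∀ n : ℕ, c ≠ -n) (hz : ‖z‖ < 1) :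
    z * (1 - z) * deriv (₂F₁ a b c) z =
      (c - b) * ₂F₁ a (b - 1) c z + (b - c + a * z) * ₂F₁ a b c z := by
  have hball : z ∈ Metric.eball (0 : 𝕂) 1 := by simpa [← ofReal_norm] using hz
  have hf := hasFPowerSeriesOnBall_ordinaryHypergeometric a b c
  have hderiv := hasSum_deriv_of_hasFPowerSeriesOnBall hf hball
  have hzderiv := hasSum_smul_deriv_of_hasFPowerSeriesOnBall hf hball
  have hleft := (hderiv.mul_left z).sub (hzderiv.mul_left z)
  have hright := (((hasSum_ordinaryHypergeometric_sub_one a (b - 1) c hz).mul_left (c - b)).add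
    ((hasSum_ordinaryHypergeometric_sub_one a b c hz).mul_left (b - c))).add
    ((hasSum_ordinaryHypergeometric a b c hz).mul_left (a * z))
  have hsum := hleft.unique <| hright.congr_fun fun n => by
    simp only [ordinaryHypergeometricSeries, FormalMultilinearSeries.coeff_ofScalars,
      smul_eq_mul, nsmul_eq_mul, Nat.cast_add, Nat.cast_one]
    linear_combination z ^ (n + 1) * ordinaryHypergeometricCoefficient_contiguous a b hc n
  simp only [zero_add, smul_eq_mul] at hsum
  linear_combination hsum

end OrdinaryHypergeometric

theorem poch_eq_eval_ascPochhammer (a : ℝ) (k : ℕ) : poch a k = (ascPochhammer ℝ k).eval a := by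
  induction k with
  | zero => simp [poch]
  | succ k ih => rw [ascPochhammer_succ_eval, ← ih, poch, poch, Finset.prod_range_succ]

theorem hyp2F1_eq_ordinaryHypergeometric (a b c : ℝ) : hyp2F1 a b c = ₂F₁ a b c := by
  ext z
  rw [hyp2F1, ordinaryHypergeometric_eq_tsum]
  refine tsum_congr fun k => ?_
  simp only [poch_eq_eval_ascPochhammer, smul_eq_mul]
  field_simp

theorem rpow_half_eq_rpow_neg_half_mul {x : ℝ} (hx : x ≠ 0) :
    x ^ ((1 : ℝ) / 2) = x ^ (-(1 : ℝ) / 2) * x := by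
  rw [← Real.rpow_add_one hx]
  norm_num

/-- The cross-ratio `w = r(1-s)/(s(1-r))` of `r, s` with respect to the endpoints `0, 1` of the
bridge; it is the argument of the hypergeometric function in `G_δ(s,r)` when `r < s`. -/
noncomputable def bridgeRatio (s r : ℝ) : ℝ := r * (1 - s) / (s * (1 - r))

/-- The function `w^{1/2} (1-w)^{δ/2+1} ₂F₁((δ+1)/2,(δ+1)/2,δ/2,w)` through which `G_δ(s,r)` depends
on the cross-ratio `w`. -/
noncomputable def twoPtProfile (δ w : ℝ) : ℝ :=
  w ^ ((1 : ℝ) / 2) * (1 - w) ^ (δ / 2 + 1) * hyp2F1 ((δ + 1) / 2) ((δ + 1) / 2) (δ / 2) w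

theorem hasDerivAt_twoPtProfile {δ w : ℝ} (hδ : ∀ n : ℕ, δ / 2 ≠ -n) (hw : w ∈ Set.Ioo (0 : ℝ) 1) :
    HasDerivAt (twoPtProfile δ)
      (w ^ (-(1 : ℝ) / 2) * (1 - w) ^ (δ / 2) *
        ((1 - w) * hyp2F1 ((δ + 1) / 2) ((δ + 1) / 2) (δ / 2) w -
          hyp2F1 ((δ + 1) / 2) ((δ - 1) / 2) (δ / 2) w / 2)) w := by
  obtain ⟨hw0, hw1⟩ := hw
  have hnorm : ‖w‖ < 1 := by rwa [Real.norm_of_nonneg hw0.le]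
  have hw1' : 0 < 1 - w := sub_pos.2 hw1
  have hcontig := mul_one_sub_mul_deriv_ordinaryHypergeometric ((δ + 1) / 2) ((δ + 1) / 2) hδ hnorm
  rw [show (δ + 1) / 2 - 1 = (δ - 1) / 2 by ring] at hcontig
  have hhyp := (differentiableAt_ordinaryHypergeometric ((δ + 1) / 2) ((δ + 1) / 2) (δ / 2)
    hnorm).hasDerivAt
  have hsqrt : HasDerivAt (fun y : ℝ => y ^ ((1 : ℝ) / 2)) _ w :=
    Real.hasDerivAt_rpow_const (Or.inl hw0.ne')
  have hpow := ((hasDerivAt_id w).const_sub 1).rpow_const (p := δ / 2 + 1) (Or.inl hw1'.ne')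
  have hprod := (hsqrt.mul hpow).mul hhyp
  unfold twoPtProfile
  simp only [hyp2F1_eq_ordinaryHypergeometric]
  refine hprod.congr_deriv ?_
  simp only [Pi.mul_apply, id]
  rw [show (1 : ℝ) / 2 - 1 = -1 / 2 by norm_num, add_sub_cancel_right,
    rpow_half_eq_rpow_neg_half_mul hw0.ne', Real.rpow_add_one hw1'.ne']
  linear_combination w ^ (-(1 : ℝ) / 2) * (1 - w) ^ (δ / 2) * hcontig

section Bridge

variable {s r : ℝ}

theorem mul_one_sub_pos_of_lt (hrs : r < s) (h : 0 < r * (1 - s)) : 0 < s * (1 - r) := by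
  linarith

theorem one_sub_bridgeRatio (h : s * (1 - r) ≠ 0) :
    1 - bridgeRatio s r = (s - r) / (s * (1 - r)) := by
  rw [bridgeRatio, one_sub_div h]
  ring

theorem bridgeRatio_mem_Ioo (hrs : r < s) (h : 0 < r * (1 - s)) :
    bridgeRatio s r ∈ Set.Ioo (0 : ℝ) 1 := by
  have hsr := mul_one_sub_pos_of_lt hrs h
  exact ⟨div_pos h hsr, (div_lt_one hsr).2 (by linarith)⟩

theorem hasDerivAt_bridgeRatio (h : s * (1 - r) ≠ 0) :
    HasDerivAt (bridgeRatio s) ((1 - s) / (s * (1 - r) ^ 2)) r := by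
  have hs : s ≠ 0 := left_ne_zero_of_mul h
  have hr : 1 - r ≠ 0 := right_ne_zero_of_mul h
  have hquot := ((hasDerivAt_id r).mul_const (1 - s)).div
    (((hasDerivAt_id r).const_sub 1).const_mul s) h
  refine hquot.congr_deriv ?_
  simp only [id]
  field_simp
  ring

theorem twoPt_eq_mul_twoPtProfile (δ : ℝ) (hrs : r < s) (h : 0 < r * (1 - s)) :
    twoPt δ s r = Kcoef δ * (s * (1 - r) * twoPtProfile δ (bridgeRatio s r)) := by
  have hsr := mul_one_sub_pos_of_lt hrs h
  have hexp : (s * (1 - r)) ^ (-((δ + 1) / 2)) = s * (1 - r) /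
      ((s * (1 - r)) ^ ((1 : ℝ) / 2) * (s * (1 - r)) ^ (δ / 2 + 1)) := by
    rw [show -((δ + 1) / 2) = 1 - (1 / 2 + (δ / 2 + 1)) by ring, Real.rpow_sub hsr, Real.rpow_one,
      Real.rpow_add hsr]
  rw [twoPt, if_neg hrs.not_gt, twoPtProfile, one_sub_bridgeRatio hsr.ne', bridgeRatio,
    Real.div_rpow h.le hsr.le, Real.div_rpow (sub_pos.2 hrs).le hsr.le, hexp]
  field_simp

theorem twoPt_eventuallyEq_mul_twoPtProfile (δ : ℝ) (hrs : r < s) (h : 0 < r * (1 - s)) :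
    twoPt δ s =ᶠ[nhds r] fun y => Kcoef δ * (s * (1 - y) * twoPtProfile δ (bridgeRatio s y)) := by
  have hpos : ∀ᶠ y in nhds r, 0 < y * (1 - s) :=
    continuousAt_const.eventually_lt (continuous_mul_const (1 - s)).continuousAt h
  filter_upwards [eventually_lt_nhds hrs, hpos] with y using twoPt_eq_mul_twoPtProfile δ

end Bridge

theorem twoPt_first_derivative_left_general {δ s r : ℝ} (hδ : ∀ n : ℕ, δ / 2 ≠ -n) (hrs : r < s)
    (h : 0 < r * (1 - s)) :
    HasDerivAt (fun r => twoPt δ s r)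
      (Kcoef δ * (1 - s) * bridgeRatio s r ^ (-(1 : ℝ) / 2) *
          (1 - bridgeRatio s r) ^ (δ / 2 + 1) *
          hyp2F1 ((δ + 1) / 2) ((δ + 1) / 2) (δ / 2) (bridgeRatio s r)
        - Kcoef δ / 2 * (s / r) * bridgeRatio s r ^ ((1 : ℝ) / 2) *
          (1 - bridgeRatio s r) ^ (δ / 2) *
          hyp2F1 ((δ + 1) / 2) ((δ - 1) / 2) (δ / 2) (bridgeRatio s r)) r := by
  have hsr := (mul_one_sub_pos_of_lt hrs h).ne'
  have hw := bridgeRatio_mem_Ioo hrs h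
  have hderiv := ((((hasDerivAt_id r).const_sub 1).const_mul s).mul
    ((hasDerivAt_twoPtProfile hδ hw).comp r (hasDerivAt_bridgeRatio hsr))).const_mul (Kcoef δ)
  refine (hderiv.congr_of_eventuallyEq
    (twoPt_eventuallyEq_mul_twoPtProfile δ hrs h)).congr_deriv ?_
  have hr : r ≠ 0 := left_ne_zero_of_mul h.ne'
  have hs : s ≠ 0 := left_ne_zero_of_mul hsr
  have hr' : 1 - r ≠ 0 := right_ne_zero_of_mul hsr
  have hs' : 1 - s = bridgeRatio s r * (s * (1 - r)) / r := by
    rw [bridgeRatio]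
    field_simp
  simp only [id, Function.comp_apply, twoPtProfile]
  rw [hs', rpow_half_eq_rpow_neg_half_mul hw.1.ne', Real.rpow_add_one (sub_pos.2 hw.2).ne']
  field_simp
  ring

theorem twoPt_first_derivative_left (δ : ℝ) (hδ : 0 < δ) (s : ℝ) (hs : s ∈ Set.Ioo (0 : ℝ) 1)
    (r : ℝ) (hr : r ∈ Set.Ioo (0 : ℝ) s) :
    HasDerivAt (fun r => twoPt δ s r)
      (Kcoef δ * (1 - s) * (r * (1 - s) / (s * (1 - r))) ^ (-(1 : ℝ) / 2) *
          (1 - r * (1 - s) / (s * (1 - r))) ^ (δ / 2 + 1) *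
          hyp2F1 ((δ + 1) / 2) ((δ + 1) / 2) (δ / 2) (r * (1 - s) / (s * (1 - r)))
        - Kcoef δ / 2 * (s / r) * (r * (1 - s) / (s * (1 - r))) ^ ((1 : ℝ) / 2) *
          (1 - r * (1 - s) / (s * (1 - r))) ^ (δ / 2) *
          hyp2F1 ((δ + 1) / 2) ((δ - 1) / 2) (δ / 2) (r * (1 - s) / (s * (1 - r)))) r := by
  have hpos : 0 < r * (1 - s) := mul_pos hr.1 (sub_pos.2 hs.2)
  exact twoPt_first_derivative_left_general (fun n => by linarith [n.cast_nonneg (α := ℝ)])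
    hr.2 hpos
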